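/- Let A be a 2μ×2ν generic partitioned matrix over F(x) with 2×2 blocks A_{αβ} x_{αβ}, and let I be a set of index pairs (α,β) with A_{αβ} ≠ 0. If some row-block index α is incident to at least three edges of I (i.e., there exist three distinct β₁, β₂, β₃ with (α,βᵢ) ∈ I), then there exists an edge e ∈ I with rank A_{I∖{e}} = rank A_I; in particular I is not a matching. -/

import Mathlib

open Matrix

/-- The `(2 × 2)`-type generic partitioned matrix with blocks `A_{αβ} x_{αβ}`,
restricted to blocks in `J`, over the rational function field `F(x)`. -/
noncomputable def genPartMat {F : Type*} [Field F] {μ ν : ℕ}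
    (A : Fin μ → Fin ν → Matrix (Fin 2) (Fin 2) F) (J : Finset (Fin μ × Fin ν)) :
    Matrix (Fin μ × Fin 2) (Fin ν × Fin 2)
      (FractionRing (MvPolynomial (Fin μ × Fin ν) F)) :=
  Matrix.of fun p q =>
    if (p.1, q.1) ∈ J then
      algebraMap (MvPolynomial (Fin μ × Fin ν) F) _
        (MvPolynomial.C (A p.1 q.1 p.2 q.2) * MvPolynomial.X (p.1, q.1))
    else 0

/-! Fix a nonzero minor of maximal rank. Each row in the row block `α` is linear in the variables
`x_{αβ}` and every other row is free of them, so a monomial of this minor involves at most as many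
of the `x_{αβ}` as the block has rows, namely two. With three edges at `α`, some `x_{αβ}` is absent
from the monomial; setting it to zero deletes the edge `(α, β)` but keeps the monomial, hence the
minor and the rank. -/

section Rank

variable {R K L l m n : Type*}

theorem exists_linearIndependent_row_comp [Field K] [Finite m] [Fintype n] (M : Matrix m n K)
    {r : ℕ} (hr : M.rank = r) : ∃ f : Fin r → m, LinearIndependent K (M.row ∘ f) := by
  subst hr
  rw [rank_eq_finrank_span_row]
  obtain ⟨v, hv, -, hli⟩ := Submodule.exists_fun_fin_finrank_span_eq K (Set.range M.row)
  choose f hf using hv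
  exact ⟨f, by rwa [show M.row ∘ f = v from funext hf]⟩

theorem exists_det_submatrix_ne_zero [Field K] [Finite m] [Fintype n] (M : Matrix m n K) :
    ∃ (f : Fin M.rank → m) (g : Fin M.rank → n),
      Function.Injective f ∧ (M.submatrix f g).det ≠ 0 := by
  obtain ⟨f, hf⟩ := exists_linearIndependent_row_comp M rfl
  have rank_rows : (M.submatrix f id)ᵀ.rank = M.rank := by
    rw [rank_transpose, LinearIndependent.rank_matrix (M := M.submatrix f id) hf, Fintype.card_fin]
  obtain ⟨g, hg⟩ := exists_linearIndependent_row_comp _ rank_rows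
  have isUnit_minor : IsUnit (M.submatrix f g)ᵀ := linearIndependent_rows_iff_isUnit.1 hg
  exact ⟨f, g, hf.injective.of_comp,
    ((isUnit_iff_isUnit_det _).1 ((isUnit_transpose _).1 isUnit_minor)).ne_zero⟩

theorem card_le_rank_of_det_submatrix_ne_zero [CommRing R] [IsDomain R] [Fintype l] [DecidableEq l]
    [Fintype n] {M : Matrix m n R} {f : l → m} {g : l → n} (h : (M.submatrix f g).det ≠ 0) :
    Fintype.card l ≤ M.rank :=
  (rank_of_det_ne_zero h).symm.trans_le (rank_submatrix_le M f g)

theorem det_submatrix_map [CommRing R] [CommRing K] [Fintype l] [DecidableEq l] (φ : R →+* K)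
    (M : Matrix m n R) (f : l → m) (g : l → n) :
    ((M.map φ).submatrix f g).det = φ (M.submatrix f g).det := by
  rw [submatrix_map, ← RingHom.mapMatrix_apply, ← RingHom.map_det]

theorem rank_map_le_rank_map_of_ker_le [CommRing R] [CommRing K] [IsDomain K] [Field L] [Finite m]
    [Fintype n] (φ : R →+* K) (ψ : R →+* L) (hker : RingHom.ker φ ≤ RingHom.ker ψ)
    (M : Matrix m n R) : (M.map ψ).rank ≤ (M.map φ).rank := by
  obtain ⟨f, g, -, hdet⟩ := exists_det_submatrix_ne_zero (M.map ψ)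
  rw [det_submatrix_map] at hdet
  have hdet' : ((M.map φ).submatrix f g).det ≠ 0 := by
    rw [det_submatrix_map]
    exact fun h => hdet (hker h)
  simpa only [Fintype.card_fin] using card_le_rank_of_det_submatrix_ne_zero hdet'

end Rank

section MvPolynomial

open MvPolynomial

variable {R M σ ι : Type*} [CommRing R]

theorem isWeightedHomogeneous_det [AddCommMonoid M] [Fintype ι] [DecidableEq ι] {w : σ → M}
    {d : ι → M} {N : Matrix ι ι (MvPolynomial σ R)}
    (hN : ∀ i j, IsWeightedHomogeneous w (N i j) (d i)) :
    IsWeightedHomogeneous w N.det (∑ i, d i) := by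
  rw [← det_transpose, det_apply]
  refine (weightedHomogeneousSubmodule R w _).sum_mem fun τ _ => ?_
  rw [Units.smul_def]
  exact zsmul_mem (IsWeightedHomogeneous.prod _ _ _ fun i _ => hN i (τ i)) _

theorem exists_mem_eq_zero_of_weight_indicator_lt_card {S : Finset σ} {k : σ →₀ ℕ}
    (hk : Finsupp.weight ((S : Set σ).indicator 1) k < S.card) : ∃ s ∈ S, k s = 0 := by
  by_contra! hne
  refine hk.not_ge ?_
  calc S.card = ∑ s ∈ S, 1 := Finset.card_eq_sum_ones S
    _ ≤ ∑ s ∈ S, k s • (S : Set σ).indicator (1 : σ → ℕ) s :=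
        Finset.sum_le_sum fun s hs => by simpa [hs] using Nat.one_le_iff_ne_zero.2 (hne s hs)
    _ ≤ ∑ s ∈ k.support, k s • (S : Set σ).indicator (1 : σ → ℕ) s :=
        Finset.sum_le_sum_of_subset fun s hs => Finsupp.mem_support_iff.2 (hne s hs)
    _ = Finsupp.weight ((S : Set σ).indicator 1) k := (Finsupp.weight_apply _ k).symm

variable [DecidableEq σ]

/-- The substitution `x_s ↦ 0`, as an endomorphism so that the remaining variables keep their
names. -/
noncomputable def killVar (s : σ) : MvPolynomial σ R →ₐ[R] MvPolynomial σ R :=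
  aeval (Function.update X s 0)

theorem coeff_killVar_of_eq_zero {s : σ} {k : σ →₀ ℕ} (hk : k s = 0) (p : MvPolynomial σ R) :
    coeff k (killVar s p) = coeff k p := by
  induction p using MvPolynomial.induction_on' with
  | add p q hp hq => rw [map_add, coeff_add, coeff_add, hp, hq]
  | monomial e r =>
    rw [killVar, aeval_monomial, algebraMap_eq]
    by_cases he : e s = 0
    · have prod_eq : (e.prod fun i j => Function.update X s 0 i ^ j) =
          e.prod fun i j => (X i : MvPolynomial σ R) ^ j :=
        Finsupp.prod_congr fun i hi => by
          rw [Function.update_of_ne (ne_of_apply_ne e (by rwa [he, ← Finsupp.mem_support_iff]))]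
      rw [prod_eq, ← monomial_eq]
    · have prod_eq : (e.prod fun i j => (Function.update X s 0 i : MvPolynomial σ R) ^ j) = 0 :=
        Finset.prod_eq_zero (Finsupp.mem_support_iff.2 he) (by simp [he])
      have hne : e ≠ k := fun h => he (h ▸ hk)
      rw [prod_eq, mul_zero, coeff_zero, coeff_monomial, if_neg hne]

theorem exists_killVar_ne_zero {S : Finset σ} {p : MvPolynomial σ R} {d : ℕ}
    (hp : IsWeightedHomogeneous ((S : Set σ).indicator 1) p d) (hp0 : p ≠ 0) (hd : d < S.card) :
    ∃ s ∈ S, killVar s p ≠ 0 := by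
  obtain ⟨k, hk⟩ := MvPolynomial.ne_zero_iff.1 hp0
  obtain ⟨s, hs, hks⟩ := exists_mem_eq_zero_of_weight_indicator_lt_card ((hp hk).trans_lt hd)
  refine ⟨s, hs, MvPolynomial.ne_zero_iff.2 ⟨k, ?_⟩⟩
  rwa [coeff_killVar_of_eq_zero hks]

theorem exists_rank_map_killVar_eq {K m n : Type*} [Field K] [Algebra (MvPolynomial σ R) K]
    [FaithfulSMul (MvPolynomial σ R) K] [Fintype m] [Fintype n] {S : Finset σ} {d : m → ℕ}
    {N : Matrix m n (MvPolynomial σ R)}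
    (hN : ∀ i j, IsWeightedHomogeneous ((S : Set σ).indicator 1) (N i j) (d i))
    (hd : ∑ i, d i < S.card) :
    ∃ s ∈ S, ((N.map (killVar s)).map (algebraMap _ K)).rank = (N.map (algebraMap _ K)).rank := by
  have hinj := FaithfulSMul.algebraMap_injective (MvPolynomial σ R) K
  obtain ⟨f, g, hf, hdet⟩ := exists_det_submatrix_ne_zero (N.map (algebraMap _ K))
  rw [det_submatrix_map, map_ne_zero_iff _ hinj] at hdet
  have minor_degree_lt : ∑ i, d (f i) < S.card :=
    calc ∑ i, d (f i) = ∑ i ∈ Finset.univ.map ⟨f, hf⟩, d i := (Finset.sum_map _ ⟨f, hf⟩ d).symm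
      _ ≤ ∑ i, d i := Finset.sum_le_sum_of_subset (Finset.subset_univ _)
      _ < S.card := hd
  obtain ⟨s, hs, hkill⟩ := exists_killVar_ne_zero
    (isWeightedHomogeneous_det fun i j => hN (f i) (g j)) hdet minor_degree_lt
  refine ⟨s, hs, le_antisymm ?_ ?_⟩
  · rw [Matrix.map_map]
    exact rank_map_le_rank_map_of_ker_le (algebraMap _ K)
      ((algebraMap _ K).comp (killVar s).toRingHom)
      (((RingHom.injective_iff_ker_eq_bot _).1 hinj).trans_le bot_le) N
  · have hdet' : (((N.map (killVar s)).map (algebraMap _ K)).submatrix f g).det ≠ 0 := by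
      rw [det_submatrix_map, map_ne_zero_iff _ hinj]
      exact (det_submatrix_map (killVar s).toRingHom N f g).trans_ne hkill
    simpa only [Fintype.card_fin] using card_le_rank_of_det_submatrix_ne_zero hdet'

end MvPolynomial

section LabelledMatrix

open MvPolynomial

variable {R m n μ ν : Type*} [CommRing R] [DecidableEq μ] [DecidableEq ν]

/-- The generic partitioned matrix over the polynomial ring, with entries `c p q * x_{αβ}` for `p`
in the row block `α` and `q` in the column block `β`, restricted to the blocks in `J`. The blocks
are the fibres of the labellings `a` and `b`, so their sizes may vary. -/
noncomputable def labelledGenericMatrix (a : m → μ) (b : n → ν) (c : Matrix m n R)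
    (J : Finset (μ × ν)) : Matrix m n (MvPolynomial (μ × ν) R) :=
  Matrix.of fun p q => if (a p, b q) ∈ J then C (c p q) * X (a p, b q) else 0

variable (a : m → μ) (b : n → ν) (c : Matrix m n R)

theorem labelledGenericMatrix_map_killVar (J : Finset (μ × ν)) (e : μ × ν) :
    (labelledGenericMatrix a b c J).map (killVar e) =
      labelledGenericMatrix a b c (J.erase e) := by
  ext1 p q
  obtain rfl | he := eq_or_ne (a p, b q) e
  · by_cases hJ : (a p, b q) ∈ J <;> simp [labelledGenericMatrix, killVar, hJ]
  · by_cases hJ : (a p, b q) ∈ J <;> simp [labelledGenericMatrix, killVar, hJ, he]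

theorem isWeightedHomogeneous_labelledGenericMatrix (J : Finset (μ × ν)) (α : μ) (p : m) (q : n) :
    IsWeightedHomogeneous ((J.filter (·.1 = α) : Set (μ × ν)).indicator 1)
      (labelledGenericMatrix a b c J p q) (if a p = α then 1 else 0) := by
  by_cases hJ : (a p, b q) ∈ J
  · simpa [labelledGenericMatrix, Set.indicator_apply, hJ] using
      (isWeightedHomogeneous_C _ (c p q)).mul (isWeightedHomogeneous_X R
        ((J.filter (·.1 = α) : Set (μ × ν)).indicator (1 : μ × ν → ℕ)) (a p, b q))
  · simpa [labelledGenericMatrix, hJ] using isWeightedHomogeneous_zero R _ _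

theorem genPartMat_not_matching_of_deg_ge_three_general (K : Type*) [Field K]
    [Algebra (MvPolynomial (μ × ν) R) K] [FaithfulSMul (MvPolynomial (μ × ν) R) K] [Fintype m]
    [Fintype n] {I : Finset (μ × ν)} {α : μ}
    (hα : (Finset.univ.filter (a · = α)).card < (I.filter (·.1 = α)).card) :
    ∃ e ∈ I, ((labelledGenericMatrix a b c (I.erase e)).map (algebraMap _ K)).rank =
      ((labelledGenericMatrix a b c I).map (algebraMap _ K)).rank := by
  rw [Finset.card_filter] at hα
  obtain ⟨e, he, hrank⟩ := exists_rank_map_killVar_eq (K := K)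
    (isWeightedHomogeneous_labelledGenericMatrix a b c I α) hα
  rw [labelledGenericMatrix_map_killVar] at hrank
  exact ⟨e, Finset.mem_of_mem_filter e he, hrank⟩

end LabelledMatrix

theorem card_filter_fst_eq {μ κ : Type*} [Fintype μ] [Fintype κ] [DecidableEq μ] (α : μ) :
    (Finset.univ.filter fun p : μ × κ => p.1 = α).card = Fintype.card κ := by
  have fiber_eq : (Finset.univ.filter fun p : μ × κ => p.1 = α) = {α} ×ˢ Finset.univ := by
    ext p
    simp only [Finset.mem_filter_univ, Finset.mem_product, Finset.mem_singleton,
      Finset.mem_univ, and_true]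
  rw [fiber_eq, Finset.card_product, Finset.card_singleton, one_mul, Finset.card_univ]

theorem genPartMat_eq_map_labelledGenericMatrix {F : Type*} [Field F] {μ ν : ℕ}
    (A : Fin μ → Fin ν → Matrix (Fin 2) (Fin 2) F) (J : Finset (Fin μ × Fin ν)) :
    genPartMat A J =
      (labelledGenericMatrix Prod.fst Prod.fst (Matrix.of fun p q => A p.1 q.1 p.2 q.2) J).map
        (algebraMap _ _) := by
  ext p q
  simp only [genPartMat, labelledGenericMatrix, of_apply, map_apply, apply_ite (algebraMap _ _),
    map_zero]

/-- If in an edge set `I` some row-block index `α` is incident to three distinct edges,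
then removing some edge of `I` does not change the rank of `A_I`; in particular
`I` is not a matching. -/
theorem genPartMat_not_matching_of_deg_ge_three {F : Type*} [Field F] {μ ν : ℕ}
    (A : Fin μ → Fin ν → Matrix (Fin 2) (Fin 2) F) (I : Finset (Fin μ × Fin ν))
    (hIE : ∀ e ∈ I, A e.1 e.2 ≠ 0)
    (h3 : ∃ (α : Fin μ) (β₁ β₂ β₃ : Fin ν), β₁ ≠ β₂ ∧ β₁ ≠ β₃ ∧ β₂ ≠ β₃ ∧
      (α, β₁) ∈ I ∧ (α, β₂) ∈ I ∧ (α, β₃) ∈ I) :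
    (∃ e ∈ I, (genPartMat A (I.erase e)).rank = (genPartMat A I).rank) ∧
      ¬ (∀ e ∈ I, (genPartMat A (I.erase e)).rank < (genPartMat A I).rank) := by
  obtain ⟨α, β₁, β₂, β₃, h12, h13, h23, h1, h2, h3⟩ := h3
  have three_edges : 2 < (I.filter (·.1 = α)).card :=
    Finset.two_lt_card.2 ⟨(α, β₁), by simp [h1], (α, β₂), by simp [h2], (α, β₃), by simp [h3],
      by simp [h12], by simp [h13], by simp [h23]⟩
  obtain ⟨e, he, hrank⟩ := genPartMat_not_matching_of_deg_ge_three_general Prod.fst Prod.fst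
    (Matrix.of fun p q => A p.1 q.1 p.2 q.2) (FractionRing (MvPolynomial (Fin μ × Fin ν) F))
    ((card_filter_fst_eq α).trans_lt (by rwa [Fintype.card_fin]))
  simp only [← genPartMat_eq_map_labelledGenericMatrix] at hrank
  exact ⟨⟨e, he, hrank⟩, fun h => (h e he).ne hrank⟩
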